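/- There exists a universal constant C > 0 such that the following holds. Let ω : ℝ² → [0,∞) be the density of an isotropic log-concave probability measure on ℝ², and let θ ∈ ℝ² with |θ| = 1. Then ∫_{-∞}^{∞} t²·ω(tθ) dt ≤ C. -/

import Mathlib

/-!
Isotropy forces a universal pointwise bound `ω p ≤ C / (2 + ‖p‖²)²`, and
`t² / (2 + t²)² ≤ 1 / (1 + t²)` is integrable on the line. Only two elementary consequences of
log-concavity are needed, both obtained by moving mass inside the plane.

* Triangles: for any points `p, x, y`, around the centroid of the triangle `p x y` the density is
  on average at least the geometric mean of its values at the vertices, so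
  `area(pxy) * (ω p * ω x * ω y) ^ (1/3) ≤ c` (`triangle_bound`).
* Dilations: `ω p ^ (1-r) * ω x ^ r ≤ ω ((1-r) p + r x)`, integrated in `x`. For `r = 1/3` it gives
  `ω p ^ (2/3) * ∫ ω ^ (1/3) ≤ 9` (`integral_cbrt_le`).

By isotropy, the mean of `area(pxy)²` over independent samples `x, y` of the measure is bounded
below. The triangle bound dominates it by a multiple of `ω p ^ (-2/3) * (∫ ω ^ (1/3))²`, hence of
`ω p ^ (-2)`, so `ω` is bounded by a universal constant (`density_le`).
The dilation with `r = 1/2`, together with `ω ≤ C * √ω` and the second moment `∫ ‖z‖² ω = 2`,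
then yields `√(ω p) * (‖p‖² + 2) ≤ C` (`density_decay`).
-/

open MeasureTheory

/-- A log-concave density on `ℝ²`, i.e. a function of the form `e^{-H}` with `H` convex. -/
def IsLogConcaveDensity (f : EuclideanSpace ℝ (Fin 2) → ℝ) : Prop :=
  (∀ x, 0 ≤ f x) ∧
  ∀ x y : EuclideanSpace ℝ (Fin 2), ∀ a b : ℝ, 0 ≤ a → 0 ≤ b → a + b = 1 →
    f x ^ a * f y ^ b ≤ f (a • x + b • y)

/-- The plane on which the densities live. -/
local notation "E2" => EuclideanSpace ℝ (Fin 2)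

/-! ### Measurability and moments -/

/-- The superlevel sets of a log-concave density are convex, hence null-measurable, so the
density is automatically a.e.-measurable. -/
lemma IsLogConcaveDensity.aemeasurable {ω : E2 → ℝ} (h : IsLogConcaveDensity ω) :
    AEMeasurable ω volume := by
  apply NullMeasurable.aemeasurable
  have key : ∀ c : ℝ, NullMeasurableSet (ω ⁻¹' Set.Ici c) (volume : Measure E2) := by
    intro c
    by_cases hc : c ≤ 0
    · have : ω ⁻¹' Set.Ici c = Set.univ := by
        ext x
        simpa using hc.trans (h.1 x)
      rw [this]
      exact nullMeasurableSet_univ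
    · push Not at hc
      apply Convex.nullMeasurableSet
      intro x hx y hy a b ha hb hab
      have hx' : c ≤ ω x := hx
      have hy' : c ≤ ω y := hy
      calc c = c ^ a * c ^ b := by rw [← Real.rpow_add hc, hab, Real.rpow_one]
        _ ≤ ω x ^ a * ω y ^ b := by
          have := h.1 x
          gcongr
        _ ≤ _ := h.2 x y a b ha hb hab
  exact measurable_of_Ici (δ := NullMeasurableSpace E2 volume) (f := ω) key

/-- Polynomials of degree at most two are integrable against `ω`, with the integrals that isotropy
prescribes. Stated with Lebesgue measure, and with integrability explicit. -/
def QuadMoments (ω : E2 → ℝ) : Prop :=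
  ∀ α β₀ β₁ γ₀ γ₁ γ₂ : ℝ,
    Integrable (fun x : E2 => (α + β₀ * x 0 + β₁ * x 1 + γ₀ * (x 0 * x 0) + γ₁ * (x 0 * x 1)
      + γ₂ * (x 1 * x 1)) * ω x) ∧
    ∫ x : E2, (α + β₀ * x 0 + β₁ * x 1 + γ₀ * (x 0 * x 0) + γ₁ * (x 0 * x 1)
      + γ₂ * (x 1 * x 1)) * ω x = α + γ₀ + γ₂

lemma quadMoments_of_isotropic {ω : E2 → ℝ} (h : IsLogConcaveDensity ω)
    (hp : IsProbabilityMeasure (volume.withDensity (fun x => ENNReal.ofReal (ω x))))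
    (hc : (∫ x, x ∂(volume.withDensity (fun x => ENNReal.ofReal (ω x)))) = 0)
    (hv : ∀ i j : Fin 2,
          (∫ x, x i * x j ∂(volume.withDensity (fun x => ENNReal.ofReal (ω x))))
            = if i = j then 1 else 0) : QuadMoments ω := by
  set μ : Measure E2 := volume.withDensity (fun x => ENNReal.ofReal (ω x)) with hμ
  have hm : AEMeasurable (fun x => ENNReal.ofReal (ω x)) (volume : Measure E2) :=
    h.aemeasurable.ennreal_ofReal
  have hlt : ∀ᵐ x ∂(volume : Measure E2), ENNReal.ofReal (ω x) < ⊤ :=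
    Filter.Eventually.of_forall fun x => ENNReal.ofReal_lt_top
  have hsq : ∀ i : Fin 2, Integrable (fun x : E2 => x i * x i) μ := by
    intro i
    -- a non-integrable function would have integral `0`, not `1`
    by_contra hni
    have := hv i i
    rw [integral_undef hni] at this
    simp at this
  have hmeas : ∀ i : Fin 2, Measurable (fun x : E2 => x i) := fun i => by fun_prop
  have h1 : ∀ i : Fin 2, Integrable (fun x : E2 => x i) μ := by
    intro i
    refine ((integrable_const (1 : ℝ)).add (hsq i)).mono' (hmeas i).aestronglyMeasurable ?_
    refine Filter.Eventually.of_forall fun x => ?_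
    simp only [Pi.add_apply, Real.norm_eq_abs]
    nlinarith [sq_nonneg (|x i| - 1), abs_mul_abs_self (x i), abs_nonneg (x i)]
  have h01 : Integrable (fun x : E2 => x 0 * x 1) μ := by
    refine ((hsq 0).add (hsq 1)).mono' ((hmeas 0).mul (hmeas 1)).aestronglyMeasurable ?_
    refine Filter.Eventually.of_forall fun x => ?_
    simp only [Pi.add_apply, Real.norm_eq_abs, abs_mul]
    nlinarith [sq_nonneg (|x 0| - |x 1|), abs_mul_abs_self (x 0), abs_mul_abs_self (x 1),
      mul_self_nonneg (x 0), mul_self_nonneg (x 1)]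
  have hid : Integrable (fun x : E2 => x) μ := by
    have h2 := (h1 0).norm.add (h1 1).norm
    refine h2.mono' measurable_id.aestronglyMeasurable ?_
    refine Filter.Eventually.of_forall fun x => ?_
    simp only [Pi.add_apply, Real.norm_eq_abs]
    rw [EuclideanSpace.norm_eq, Fin.sum_univ_two]
    refine Real.sqrt_le_iff.2 ⟨by positivity, ?_⟩
    simp only [Real.norm_eq_abs]
    nlinarith [mul_nonneg (abs_nonneg (x 0)) (abs_nonneg (x 1))]
  have hz : ∀ i : Fin 2, ∫ x : E2, x i ∂μ = 0 := by
    intro i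
    have := (EuclideanSpace.proj (ι := Fin 2) (𝕜 := ℝ) i).integral_comp_comm hid
    rw [hc] at this
    simpa using this
  intro α β₀ β₁ γ₀ γ₁ γ₂
  have conv : ∀ F : E2 → ℝ, (fun x => (ENNReal.ofReal (ω x)).toReal • F x)
      = fun x => F x * ω x := by
    intro F
    ext x
    rw [ENNReal.toReal_ofReal (h.1 x), smul_eq_mul, mul_comm]
  have i1 := (integrable_const α (μ := μ)).add ((h1 0).const_mul β₀)
  have i2 := i1.add ((h1 1).const_mul β₁)
  have i3 := i2.add ((hsq 0).const_mul γ₀)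
  have i4 := i3.add (h01.const_mul γ₁)
  have i5 := i4.add ((hsq 1).const_mul γ₂)
  constructor
  · have := (integrable_withDensity_iff_integrable_smul₀' hm hlt).1 i5
    rw [conv] at this
    exact this
  · have := integral_withDensity_eq_integral_toReal_smul₀ hm hlt
      (fun x : E2 => α + β₀ * x 0 + β₁ * x 1 + γ₀ * (x 0 * x 0) + γ₁ * (x 0 * x 1)
      + γ₂ * (x 1 * x 1))
    rw [conv] at this
    rw [← this, ← hμ]
    have e5 := integral_add i4 ((hsq 1).const_mul γ₂)
    have e4 := integral_add i3 (h01.const_mul γ₁)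
    have e3 := integral_add i2 ((hsq 0).const_mul γ₀)
    have e2 := integral_add i1 ((h1 1).const_mul β₁)
    have e1 := integral_add (integrable_const α (μ := μ)) ((h1 0).const_mul β₀)
    simp only [Pi.add_apply] at e1 e2 e3 e4 e5
    rw [e5, e4, e3, e2, e1]
    simp only [integral_const_mul, hz, hv, integral_const]
    simp

lemma QuadMoments.integrable {ω : E2 → ℝ} (q : QuadMoments ω) : Integrable ω := by
  simpa using (q 1 0 0 0 0 0).1

lemma QuadMoments.integral_eq_one {ω : E2 → ℝ} (q : QuadMoments ω) : ∫ x, ω x = 1 := by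
  simpa using (q 1 0 0 0 0 0).2

/-! ### Dilations towards a point -/

lemma integrable_dilation {F : E2 → ℝ} (hF : Integrable F) (q : E2) {r : ℝ} (hr : 0 < r) :
    Integrable (fun x => F (q + r • x)) :=
  (hF.comp_add_left q).comp_smul hr.ne'

lemma integral_dilation (F : E2 → ℝ) (q : E2) {r : ℝ} (hr : 0 < r) :
    ∫ x, F (q + r • x) = (r ^ 2)⁻¹ * ∫ x, F x := by
  have h1 := Measure.integral_comp_smul (volume : Measure E2) (fun x => F (q + x)) r
  rw [h1, integral_add_left_eq_self]
  simp [abs_of_pos hr]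

/-- The cube root of the density. -/
noncomputable def cbrt (ω : E2 → ℝ) (x : E2) : ℝ := ω x ^ (1 / 3 : ℝ)

lemma cbrt_nonneg {ω : E2 → ℝ} (h : IsLogConcaveDensity ω) (x : E2) : 0 ≤ cbrt ω x :=
  Real.rpow_nonneg (h.1 x) _

lemma cbrt_pow_three {ω : E2 → ℝ} (h : IsLogConcaveDensity ω) (x : E2) :
    cbrt ω x ^ 3 = ω x := by
  rw [cbrt, ← Real.rpow_natCast, ← Real.rpow_mul (h.1 x)]
  norm_num

lemma cbrt_dilation {ω : E2 → ℝ} (h : IsLogConcaveDensity ω) (p x : E2) :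
    cbrt ω p ^ 2 * cbrt ω x ≤ ω ((2 / 3 : ℝ) • p + (1 / 3 : ℝ) • x) := by
  refine le_trans (le_of_eq ?_)
    (h.2 p x (2 / 3) (1 / 3) (by norm_num) (by norm_num) (by norm_num))
  rw [cbrt, cbrt, ← Real.rpow_natCast, ← Real.rpow_mul (h.1 p)]
  norm_num

lemma integrable_cbrt {ω : E2 → ℝ} (h : IsLogConcaveDensity ω) (q : QuadMoments ω) {p : E2}
    (hp : 0 < ω p) : Integrable (cbrt ω) := by
  have hs : 0 < cbrt ω p := Real.rpow_pos_of_pos hp _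
  have hi := (integrable_dilation q.integrable ((2 / 3 : ℝ) • p)
    (r := 1 / 3) (by norm_num)).const_mul ((cbrt ω p ^ 2)⁻¹)
  refine hi.mono' (h.aemeasurable.pow_const _).aestronglyMeasurable ?_
  refine Filter.Eventually.of_forall fun x => ?_
  rw [Real.norm_of_nonneg (cbrt_nonneg h x), le_inv_mul_iff₀ (by positivity)]
  exact cbrt_dilation h p x

/-- Shrinking the plane towards `p` by the factor `1/3` bounds the total mass of `ω ^ (1/3)`. -/
lemma integral_cbrt_le {ω : E2 → ℝ} (h : IsLogConcaveDensity ω) (q : QuadMoments ω) {p : E2}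
    (hp : 0 < ω p) : cbrt ω p ^ 2 * ∫ x, cbrt ω x ≤ 9 := by
  rw [← integral_const_mul]
  calc ∫ x, cbrt ω p ^ 2 * cbrt ω x
      ≤ ∫ x, ω ((2 / 3 : ℝ) • p + (1 / 3 : ℝ) • x) :=
        integral_mono ((integrable_cbrt h q hp).const_mul _)
          (integrable_dilation q.integrable _ (by norm_num)) (cbrt_dilation h p)
    _ = 9 := by
        rw [integral_dilation _ _ (by norm_num), q.integral_eq_one]
        norm_num

/-! ### Triangles -/

lemma three_point {ω : E2 → ℝ} (h : IsLogConcaveDensity ω) {x y z : E2}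
    (hx : 0 < ω x) (hy : 0 < ω y) (hz : 0 < ω z) {a b c : ℝ} (ha : 0 < a) (hb : 0 < b)
    (hc : 0 ≤ c) (habc : a + b + c = 1) :
    Real.exp (a * Real.log (ω x) + b * Real.log (ω y) + c * Real.log (ω z))
      ≤ ω (a • x + b • y + c • z) := by
  have hab : 0 < a + b := by positivity
  have h1 := h.2 x y (a / (a + b)) (b / (a + b)) (by positivity) (by positivity)
    (by field_simp)
  have h2 := h.2 ((a / (a + b)) • x + (b / (a + b)) • y) z (a + b) c hab.le hc habc
  have e1 : (a + b) • ((a / (a + b)) • x + (b / (a + b)) • y) = a • x + b • y := by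
    rw [smul_add, smul_smul, smul_smul, mul_div_cancel₀ _ hab.ne', mul_div_cancel₀ _ hab.ne']
  rw [e1] at h2
  refine le_trans (le_trans (le_of_eq ?_) (mul_le_mul_of_nonneg_right
    (Real.rpow_le_rpow (by positivity) h1 hab.le) (by positivity))) h2
  rw [Real.rpow_def_of_pos hx, Real.rpow_def_of_pos hy, Real.rpow_def_of_pos hz, ← Real.exp_add,
    ← Real.exp_mul, ← Real.exp_add]
  congr 1
  field_simp

/-- Twice the signed area of the triangle with vertices `0, u, v`. -/
noncomputable def area (u v : E2) : ℝ := u 0 * v 1 - u 1 * v 0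

/-- The linear map sending the standard basis to `u, v`. -/
noncomputable def frame (u v : E2) : E2 →ₗ[ℝ] E2 :=
  (EuclideanSpace.projₗ (ι := Fin 2) (𝕜 := ℝ) 0).smulRight u
    + (EuclideanSpace.projₗ (ι := Fin 2) (𝕜 := ℝ) 1).smulRight v

lemma frame_apply (u v e : E2) : frame u v e = e 0 • u + e 1 • v := by
  simp [frame]

lemma det_frame (u v : E2) : LinearMap.det (frame u v) = area u v := by
  rw [← LinearMap.det_toMatrix (EuclideanSpace.basisFun (Fin 2) ℝ).toBasis, Matrix.det_fin_two]
  simp [LinearMap.toMatrix_apply, frame_apply, area, mul_comm]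

/-- The Lebesgue measure of the disc of radius `1/6`. -/
noncomputable def discArea : ℝ := (volume : Measure E2).real (Metric.closedBall 0 (1 / 6))

lemma discArea_pos : 0 < discArea :=
  ENNReal.toReal_pos (Metric.measure_closedBall_pos _ _ (by norm_num)).ne'
    measure_closedBall_lt_top.ne

/-- At points symmetric about the centroid of a triangle, the lower bounds given by
log-concavity multiply to a constant, so their arithmetic mean is at least the geometric mean
of the values at the vertices. -/
lemma centroid_bound {ω : E2 → ℝ} (h : IsLogConcaveDensity ω) (p x y e : E2)
    (he : e ∈ Metric.closedBall (0 : E2) (1 / 6)) :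
    2 * (cbrt ω p * cbrt ω x * cbrt ω y)
      ≤ ω ((1 / 3 : ℝ) • (p + x + y) + frame (x - p) (y - p) e)
        + ω ((1 / 3 : ℝ) • (p + x + y) - frame (x - p) (y - p) e) := by
  have hnn := add_nonneg (h.1 ((1 / 3 : ℝ) • (p + x + y) + frame (x - p) (y - p) e))
    (h.1 ((1 / 3 : ℝ) • (p + x + y) - frame (x - p) (y - p) e))
  rcases (h.1 p).eq_or_lt with hp | hp
  · rw [cbrt, ← hp]
    simpa using hnn
  rcases (h.1 x).eq_or_lt with hx | hx
  · rw [cbrt.eq_1 ω x, ← hx]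
    simpa using hnn
  rcases (h.1 y).eq_or_lt with hy | hy
  · rw [cbrt.eq_1 ω y, ← hy]
    simpa using hnn
  have he' : ∀ i, |e i| ≤ 1 / 6 := fun i =>
    (PiLp.norm_apply_le e i).trans (by simpa using he)
  obtain ⟨h0l, h0u⟩ := abs_le.1 (he' 0)
  obtain ⟨h1l, h1u⟩ := abs_le.1 (he' 1)
  have hplus := three_point h hx hy hp (a := 1 / 3 + e 0) (b := 1 / 3 + e 1)
    (c := 1 / 3 - e 0 - e 1) (by linarith) (by linarith) (by linarith) (by ring)
  have hminus := three_point h hx hy hp (a := 1 / 3 - e 0) (b := 1 / 3 - e 1)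
    (c := 1 / 3 + e 0 + e 1) (by linarith) (by linarith) (by linarith) (by ring)
  have ep : (1 / 3 + e 0) • x + (1 / 3 + e 1) • y + (1 / 3 - e 0 - e 1) • p
      = (1 / 3 : ℝ) • (p + x + y) + frame (x - p) (y - p) e := by
    rw [frame_apply]; module
  have em : (1 / 3 - e 0) • x + (1 / 3 - e 1) • y + (1 / 3 + e 0 + e 1) • p
      = (1 / 3 : ℝ) • (p + x + y) - frame (x - p) (y - p) e := by
    rw [frame_apply]; module
  rw [ep] at hplus
  rw [em] at hminus
  set lx := Real.log (ω x)
  set ly := Real.log (ω y)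
  set lp := Real.log (ω p)
  set A := (lp + lx + ly) / 3 with hA
  set L := e 0 * (lx - lp) + e 1 * (ly - lp) with hL
  have hG : cbrt ω p * cbrt ω x * cbrt ω y = Real.exp A := by
    rw [cbrt, cbrt, cbrt, Real.rpow_def_of_pos hp, Real.rpow_def_of_pos hx,
      Real.rpow_def_of_pos hy, ← Real.exp_add, ← Real.exp_add]
    congr 1
    simp only [hA, lx, ly, lp]
    ring
  rw [show (1 / 3 + e 0) * lx + (1 / 3 + e 1) * ly + (1 / 3 - e 0 - e 1) * lp = A + L by
    rw [hA, hL]; ring] at hplus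
  rw [show (1 / 3 - e 0) * lx + (1 / 3 - e 1) * ly + (1 / 3 + e 0 + e 1) * lp = A - L by
    rw [hA, hL]; ring] at hminus
  rw [hG]
  have hprod : Real.exp (A + L) * Real.exp (A - L) = Real.exp A * Real.exp A := by
    rw [← Real.exp_add, ← Real.exp_add]
    congr 1
    ring
  have : 2 * Real.exp A ≤ Real.exp (A + L) + Real.exp (A - L) := by
    refine abs_le_of_sq_le_sq' ?_ (by positivity) |>.2
    nlinarith [sq_nonneg (Real.exp (A + L) - Real.exp (A - L))]
  linarith

/-- The affine frame of the triangle `p, x, y` maps a small disc to an ellipse around the centroid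
whose area is a fixed multiple of that of the triangle; its mass is at most one. -/
lemma triangle_bound {ω : E2 → ℝ} (h : IsLogConcaveDensity ω) (q : QuadMoments ω) (p x y : E2) :
    |area (x - p) (y - p)| * discArea * (cbrt ω p * cbrt ω x * cbrt ω y) ≤ 1 := by
  set g := (1 / 3 : ℝ) • (p + x + y) with hg
  set P : Set E2 := frame (x - p) (y - p) '' Metric.closedBall 0 (1 / 6) with hP
  have hPc : IsCompact P := (isCompact_closedBall _ _).image
    (LinearMap.continuous_of_finiteDimensional _)
  have hvol : (volume : Measure E2).real P = |area (x - p) (y - p)| * discArea := by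
    rw [Measure.real, hP, Measure.addHaar_image_linearMap, ENNReal.toReal_mul, det_frame,
      ENNReal.toReal_ofReal (abs_nonneg _)]
    rfl
  have i1 : Integrable (fun z => ω (g + z)) := q.integrable.comp_add_left g
  have i2 : Integrable (fun z => ω (g - z)) := q.integrable.comp_sub_left g
  have hle : ∫ z in P, (ω (g + z) + ω (g - z)) ≤ 2 := by
    calc ∫ z in P, (ω (g + z) + ω (g - z)) ≤ ∫ z, (ω (g + z) + ω (g - z)) :=
          setIntegral_le_integral (i1.add i2)
            (Filter.Eventually.of_forall fun z => add_nonneg (h.1 _) (h.1 _))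
      _ = 2 := by
          rw [integral_add i1 i2, integral_add_left_eq_self, integral_sub_left_eq_self,
            q.integral_eq_one]
          norm_num
  have hge : 2 * (cbrt ω p * cbrt ω x * cbrt ω y) * (volume : Measure E2).real P
      ≤ ∫ z in P, (ω (g + z) + ω (g - z)) := by
    refine setIntegral_ge_of_const_le_real hPc.measurableSet hPc.measure_lt_top.ne ?_
      (i1.add i2).integrableOn
    rintro z ⟨e, he, rfl⟩
    exact centroid_bound h p x y e he
  rw [hvol] at hge
  linarith

/-! ### Uniform bounds on the density -/

/-- The expected squared area of the triangle spanned by `p` and two independent samples is at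
least a constant by isotropy, while it is small by `triangle_bound` and `integral_cbrt_le`
if `ω p` is large. -/
lemma density_le {ω : E2 → ℝ} (h : IsLogConcaveDensity ω) (q : QuadMoments ω) (p : E2) :
    ω p ≤ 9 / discArea := by
  rcases (h.1 p).eq_or_lt with hp | hp
  · rw [← hp]
    exact div_nonneg (by norm_num) discArea_pos.le
  set d := discArea with hd
  have hd0 : 0 < d := discArea_pos
  set S := ∫ x, cbrt ω x with hS
  have hiS := integrable_cbrt h q hp
  have pt : ∀ x y : E2, d ^ 2 * cbrt ω p ^ 2 * (area (x - p) (y - p) ^ 2 * (ω x * ω y))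
      ≤ cbrt ω x * cbrt ω y := by
    intro x y
    have ht := triangle_bound h q p x y
    have h1 := cbrt_nonneg h p
    have h2 := cbrt_nonneg h x
    have h3 := cbrt_nonneg h y
    have hsq : (|area (x - p) (y - p)| * d * (cbrt ω p * cbrt ω x * cbrt ω y)) ^ 2 ≤ 1 :=
      pow_le_one₀ (by positivity) ht
    rw [← cbrt_pow_three h x, ← cbrt_pow_three h y]
    calc _ = (|area (x - p) (y - p)| * d * (cbrt ω p * cbrt ω x * cbrt ω y)) ^ 2
          * (cbrt ω x * cbrt ω y) := by
            rw [mul_pow, mul_pow, sq_abs]; ring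
      _ ≤ 1 * (cbrt ω x * cbrt ω y) := by gcongr
      _ = _ := one_mul _
  have inner : ∀ x : E2, d ^ 2 * cbrt ω p ^ 2 *
      (((x 0 - p 0) ^ 2 + (x 1 - p 1) ^ 2) * ω x) ≤ cbrt ω x * S := by
    intro x
    -- for fixed `x`, the integrand in `y` is a quadratic polynomial with constant term `k ^ 2`
    set k := (x 1 - p 1) * p 0 - (x 0 - p 0) * p 1 with hk
    obtain ⟨qi, qe⟩ := q (k ^ 2) (-2 * k * (x 1 - p 1)) (2 * k * (x 0 - p 0)) ((x 1 - p 1) ^ 2)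
      (-2 * (x 0 - p 0) * (x 1 - p 1)) ((x 0 - p 0) ^ 2)
    have hm := integral_mono (qi.const_mul (d ^ 2 * cbrt ω p ^ 2 * ω x))
      (hiS.const_mul (cbrt ω x)) (fun y => by
        refine le_trans (le_of_eq ?_) (pt x y)
        simp only [area, PiLp.sub_apply, hk]
        ring)
    rw [integral_const_mul, integral_const_mul, qe] at hm
    refine le_trans ?_ hm
    have := h.1 x
    rw [mul_comm _ (ω x), ← mul_assoc]
    refine mul_le_mul_of_nonneg_left ?_ (by positivity)
    linarith [sq_nonneg k]
  obtain ⟨qi, qe⟩ := q (p 0 ^ 2 + p 1 ^ 2) (-2 * p 0) (-2 * p 1) 1 0 1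
  have outer := integral_mono (qi.const_mul (d ^ 2 * cbrt ω p ^ 2)) (hiS.mul_const S)
    (fun x => by
      refine le_trans (le_of_eq ?_) (inner x)
      ring)
  rw [integral_const_mul, integral_mul_const, qe, ← hS] at outer
  have hS9 := integral_cbrt_le h q hp
  rw [← hS] at hS9
  have hS0 : 0 ≤ S := integral_nonneg (cbrt_nonneg h)
  have hfin : (ω p * d) ^ 2 ≤ 9 ^ 2 := by
    calc (ω p * d) ^ 2 = (cbrt ω p ^ 2) ^ 2 * (d ^ 2 * cbrt ω p ^ 2 * 1) := by
          rw [← cbrt_pow_three h p]; ring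
      _ ≤ (cbrt ω p ^ 2) ^ 2 * (d ^ 2 * cbrt ω p ^ 2 * (p 0 ^ 2 + p 1 ^ 2 + 1 + 1)) := by
          gcongr
          nlinarith [sq_nonneg (p 0), sq_nonneg (p 1)]
      _ ≤ (cbrt ω p ^ 2) ^ 2 * (S * S) := by gcongr
      _ = (cbrt ω p ^ 2 * S) ^ 2 := by ring
      _ ≤ 9 ^ 2 := by gcongr
  rw [le_div_iff₀ hd0]
  exact abs_le_of_sq_le_sq' hfin (by norm_num) |>.2

/-- Contracting the plane towards `p` by the factor `1/2` yields a lower bound for the second moment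
of order `√(ω p) * (‖p‖² + 2)`, where the boundedness of `ω` serves to replace `√ω` by `ω`. -/
lemma density_decay {ω : E2 → ℝ} (h : IsLogConcaveDensity ω) (q : QuadMoments ω) (p : E2) :
    ω p * (p 0 ^ 2 + p 1 ^ 2 + 2) ^ 2 ≤ 1024 * (9 / discArea) := by
  set B := 9 / discArea with hB
  have hB0 : 0 < B := div_pos (by norm_num) discArea_pos
  have pt : ∀ x : E2, Real.sqrt (ω p) * ω x
      ≤ Real.sqrt B * ω ((1 / 2 : ℝ) • p + (1 / 2 : ℝ) • x) := by
    intro x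
    have h1 := h.2 p x (1 / 2) (1 / 2) (by norm_num) (by norm_num) (by norm_num)
    rw [← Real.sqrt_eq_rpow, ← Real.sqrt_eq_rpow] at h1
    have h2 : Real.sqrt (ω x) ≤ Real.sqrt B := Real.sqrt_le_sqrt (density_le h q x)
    calc Real.sqrt (ω p) * ω x
        = Real.sqrt (ω x) * (Real.sqrt (ω p) * Real.sqrt (ω x)) := by
          nth_rewrite 1 [← Real.mul_self_sqrt (h.1 x)]; ring
      _ ≤ Real.sqrt B * ω ((1 / 2 : ℝ) • p + (1 / 2 : ℝ) • x) := by gcongr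
  obtain ⟨qi, qe⟩ := q 0 0 0 1 0 1
  obtain ⟨ri, re⟩ := q (p 0 ^ 2 + p 1 ^ 2) (2 * p 0) (2 * p 1) 1 0 1
  have di := integrable_dilation qi ((1 / 2 : ℝ) • p) (r := 1 / 2) (by norm_num)
  have de := integral_dilation (fun x : E2 => (0 + 0 * x 0 + 0 * x 1 + 1 * (x 0 * x 0)
    + 0 * (x 0 * x 1) + 1 * (x 1 * x 1)) * ω x) ((1 / 2 : ℝ) • p) (r := 1 / 2) (by norm_num)
  rw [qe] at de
  have hm := integral_mono (ri.const_mul (Real.sqrt (ω p) / 4)) (di.const_mul (Real.sqrt B))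
    (fun x => by
      have := mul_le_mul_of_nonneg_left (pt x)
        (show 0 ≤ ((p 0 + x 0) ^ 2 + (p 1 + x 1) ^ 2) / 4 by positivity)
      refine le_trans (le_of_eq ?_) (this.trans (le_of_eq ?_))
      · ring
      · simp only [PiLp.add_apply, PiLp.smul_apply, smul_eq_mul]
        ring)
  rw [integral_const_mul, integral_const_mul, re, de] at hm
  have hn : Real.sqrt (ω p) * (p 0 ^ 2 + p 1 ^ 2 + 2) ≤ 32 * Real.sqrt B := by
    norm_num at hm
    linarith
  have := pow_le_pow_left₀ (by positivity) hn 2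
  rw [mul_pow, mul_pow, Real.sq_sqrt (h.1 p), Real.sq_sqrt hB0.le] at this
  linarith

/-- there is a universal constant `C > 0` such that for the density `ω` of
any isotropic log-concave probability measure on `ℝ²` and any unit vector `θ`,
`∫ t²·ω(tθ) dt ≤ C`. -/
theorem stmt_14 :
    ∃ C : ℝ, 0 < C ∧
      ∀ ω : EuclideanSpace ℝ (Fin 2) → ℝ,
        IsLogConcaveDensity ω →
        -- ω is the density of a probability measure μ
        IsProbabilityMeasure (volume.withDensity (fun x => ENNReal.ofReal (ω x))) →
        -- μ is centered
        (∫ x, x ∂(volume.withDensity (fun x => ENNReal.ofReal (ω x)))) = 0 →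
        -- μ has identity covariance
        (∀ i j : Fin 2,
          (∫ x, x i * x j ∂(volume.withDensity (fun x => ENNReal.ofReal (ω x))))
            = if i = j then 1 else 0) →
      ∀ θ : EuclideanSpace ℝ (Fin 2), ‖θ‖ = 1 →
        (∫ t : ℝ, t ^ 2 * ω (t • θ)) ≤ C := by
  have hd := discArea_pos
  refine ⟨1024 * (9 / discArea) * Real.pi, by positivity, ?_⟩
  intro ω h hp hc hv θ hθ
  have q := quadMoments_of_isotropic h hp hc hv
  have hθ2 : θ 0 ^ 2 + θ 1 ^ 2 = 1 := by
    have := EuclideanSpace.norm_sq_eq θ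
    rw [hθ, Fin.sum_univ_two] at this
    simpa using this.symm
  calc ∫ t : ℝ, t ^ 2 * ω (t • θ)
      ≤ ∫ t : ℝ, 1024 * (9 / discArea) * (1 + t ^ 2)⁻¹ := by
        refine integral_mono_of_nonneg
          (Filter.Eventually.of_forall fun t => mul_nonneg (sq_nonneg t) (h.1 _))
          (integrable_inv_one_add_sq.const_mul _) (Filter.Eventually.of_forall fun t => ?_)
        have hdec := density_decay h q (t • θ)
        have ht : (t • θ) 0 ^ 2 + (t • θ) 1 ^ 2 = t ^ 2 := by
          simp only [PiLp.smul_apply, smul_eq_mul]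
          linear_combination t ^ 2 * hθ2
        rw [ht] at hdec
        change t ^ 2 * ω (t • θ) ≤ 1024 * (9 / discArea) * (1 + t ^ 2)⁻¹
        rw [← div_eq_mul_inv, le_div_iff₀ (by positivity)]
        refine le_trans ?_ hdec
        have h0 := h.1 (t • θ)
        nlinarith [mul_nonneg h0 (sq_nonneg t)]
    _ = 1024 * (9 / discArea) * Real.pi := by
        rw [integral_const_mul, integral_univ_inv_one_add_sq]
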